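/- Let n be a positive integer, B ≥ 0, 0 < ε₀ ≤ 1/√n, and let f : {-1,1}^n → [-1,1] satisfy |E_δ[f] − E_0[f]| ≤ |δ| · B for all δ ∈ [-1,1] with |δ| ≥ ε₀. Then for all ε with |ε| < ε₀, we have |E_ε[f] − E_0[f]| ≤ |ε| · (B + n·(|ε| + ε₀)) ≤ |ε| · (B + 2n·ε₀). -/

import Mathlib

open Finset

/-- The real sign `±1` associated to a Boolean, encoding `{-1,1}`. -/
noncomputable def sgn (b : Bool) : ℝ := if b then 1 else -1

/-- Fourier coefficient `f̂(S) = 2^{-n} ∑_x f(x) ∏_{i∈S} x_i` of `f : {-1,1}^n → ℝ`. -/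
noncomputable def walshCoeff {n : ℕ} (f : (Fin n → Bool) → ℝ) (S : Finset (Fin n)) : ℝ :=
  (2 ^ n : ℝ)⁻¹ * ∑ x : Fin n → Bool, f x * ∏ i ∈ S, sgn (x i)

/-- Expectation of `f` under `ε`-biased coins:
`E_ε[f] = ∑_x f(x) ∏_i (1 + ε·x_i)/2`. -/
noncomputable def biasedExp {n : ℕ} (f : (Fin n → Bool) → ℝ) (ε : ℝ) : ℝ :=
  ∑ x : Fin n → Bool, f x * ∏ i : Fin n, (1 + ε * sgn (x i)) / 2

/-!
Expanding the product of the biased weights gives `E_ε[f] = ∑ S, ε ^ #S * f̂(S)`, so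
`E_ε[f] - E_0[f]` is `ε` times the level-one sum `a = ∑ i, f̂({i})` plus a tail over `2 ≤ #S`.
By Cauchy–Schwarz and Parseval, the tail is at most `‖f‖₂ * √((1 + ε ^ 2) ^ n - 1 - n * ε ^ 2)`,
hence at most `n * ε ^ 2 * ‖f‖₂` as long as `n * ε ^ 2 ≤ 1`. A bound on `E_δ[f] - E_0[f]` at a
single `δ ≠ 0` therefore bounds `a`, and the bound on `a` controls every other small bias.
-/

section Walsh

variable {n : ℕ}

/-- The Walsh character `χ_S(x) = ∏_{i ∈ S} x_i` on `{-1,1}^n`, the function against which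
`walshCoeff f S` integrates `f`. -/
noncomputable def walsh (S : Finset (Fin n)) (x : Fin n → Bool) : ℝ := ∏ i ∈ S, sgn (x i)

/-- The norm `‖f‖₂ = (2^{-n} ∑_x f(x)²)^{1/2}` of `f` in `L²` of the uniform measure on
`{-1,1}^n`. -/
noncomputable def uniformL2Norm (f : (Fin n → Bool) → ℝ) : ℝ :=
  √((2 ^ n : ℝ)⁻¹ * ∑ x, f x ^ 2)

/-- The sum `∑_i f̂({i})` of the Fourier coefficients of degree one, which is the derivative of
`E_ε[f]` at `ε = 0`. -/
noncomputable def levelOneSum (f : (Fin n → Bool) → ℝ) : ℝ := ∑ i, walshCoeff f {i}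

lemma one_add_sgn_mul_sgn (a b : Bool) : 1 + sgn a * sgn b = if a = b then 2 else 0 := by
  cases a <;> cases b <;> norm_num [sgn]

lemma prod_one_add_mul_sgn (ε : ℝ) (x : Fin n → Bool) :
    ∏ i, (1 + ε * sgn (x i)) = ∑ S, ε ^ #S * walsh S x := by
  simp only [prod_one_add, powerset_univ, prod_mul_distrib, prod_const, walsh]

lemma sum_walsh_mul_walsh (x y : Fin n → Bool) :
    ∑ S, walsh S x * walsh S y = if x = y then 2 ^ n else 0 := by
  calc ∑ S, walsh S x * walsh S y = ∏ i, (1 + sgn (x i) * sgn (y i)) := by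
        simp only [prod_one_add, powerset_univ, prod_mul_distrib, walsh]
    _ = ∏ i, if x i = y i then 2 else 0 := by simp only [one_add_sgn_mul_sgn]
    _ = if x = y then 2 ^ n else 0 := by
        simp [Fintype.prod_ite_zero, funext_iff]

theorem biasedExp_eq_sum_pow_card_mul_walshCoeff (f : (Fin n → Bool) → ℝ) (ε : ℝ) :
    biasedExp f ε = ∑ S, ε ^ #S * walshCoeff f S := by
  calc biasedExp f ε = ∑ x, ∑ S, ε ^ #S * ((2 ^ n : ℝ)⁻¹ * (f x * walsh S x)) := by
        refine sum_congr rfl fun x _ => ?_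
        rw [prod_div_distrib, prod_one_add_mul_sgn, prod_const, card_univ, Fintype.card_fin,
          sum_div, mul_sum]
        exact sum_congr rfl fun S _ => by ring
    _ = ∑ S, ε ^ #S * walshCoeff f S := by
        rw [sum_comm]
        simp only [walshCoeff, walsh, mul_sum]

lemma biasedExp_zero (f : (Fin n → Bool) → ℝ) : biasedExp f 0 = walshCoeff f ∅ := by
  rw [biasedExp_eq_sum_pow_card_mul_walshCoeff, Fintype.sum_eq_single ∅]
  · simp
  · intro S hS
    rw [zero_pow (card_ne_zero.2 (nonempty_iff_ne_empty.2 hS)), zero_mul]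

lemma uniformL2Norm_nonneg (f : (Fin n → Bool) → ℝ) : 0 ≤ uniformL2Norm f := Real.sqrt_nonneg _

lemma uniformL2Norm_sq (f : (Fin n → Bool) → ℝ) :
    uniformL2Norm f ^ 2 = (2 ^ n : ℝ)⁻¹ * ∑ x, f x ^ 2 :=
  Real.sq_sqrt (by positivity)

lemma uniformL2Norm_le_of_abs_le {f : (Fin n → Bool) → ℝ} {M : ℝ} (hM : 0 ≤ M)
    (hf : ∀ x, |f x| ≤ M) : uniformL2Norm f ≤ M := by
  refine Real.sqrt_le_iff.2 ⟨hM, (inv_mul_le_iff₀ (by positivity)).2 ?_⟩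
  calc ∑ x, f x ^ 2 ≤ ∑ _x : Fin n → Bool, M ^ 2 :=
        sum_le_sum fun x _ => sq_le_sq' (abs_le.1 (hf x)).1 (abs_le.1 (hf x)).2
    _ = 2 ^ n * M ^ 2 := by simp

theorem sum_walshCoeff_sq (f : (Fin n → Bool) → ℝ) :
    ∑ S, walshCoeff f S ^ 2 = uniformL2Norm f ^ 2 := by
  have sum_sq_eq : ∑ S, (∑ x, f x * walsh S x) ^ 2 = 2 ^ n * ∑ x, f x ^ 2 := by
    calc ∑ S, (∑ x, f x * walsh S x) ^ 2
        = ∑ x, ∑ y, f x * f y * ∑ S, walsh S x * walsh S y := by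
          simp_rw [sq, sum_mul_sum, mul_sum]
          rw [sum_comm]
          refine sum_congr rfl fun x _ => ?_
          rw [sum_comm]
          exact sum_congr rfl fun y _ => sum_congr rfl fun S _ => mul_mul_mul_comm _ _ _ _
      _ = ∑ x, f x * f x * 2 ^ n := by
          simp only [sum_walsh_mul_walsh, mul_ite, mul_zero, sum_ite_eq, mem_univ, if_true]
      _ = 2 ^ n * ∑ x, f x ^ 2 := by
          rw [mul_sum]
          exact sum_congr rfl fun x _ => by ring
  calc ∑ S, walshCoeff f S ^ 2 = ((2 ^ n : ℝ)⁻¹) ^ 2 * ∑ S, (∑ x, f x * walsh S x) ^ 2 := by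
        simp only [walshCoeff, walsh, mul_pow, ← mul_sum]
    _ = uniformL2Norm f ^ 2 := by
        rw [sum_sq_eq, uniformL2Norm_sq]
        field_simp

end Walsh

section Tail

lemma sum_finset_eq_empty_add_singleton_add_two_le_card {α M : Type*} [Fintype α]
    [AddCommMonoid M] (g : Finset α → M) :
    ∑ S, g S = g ∅ + ∑ i, g {i} + ∑ S with 2 ≤ #S, g S := by
  classical
  have card_lt_two_eq : ({S | ¬ 2 ≤ #S} : Finset (Finset α))
      = insert ∅ (univ.map ⟨singleton, singleton_injective⟩) := by
    ext S
    simp only [mem_filter, mem_univ, true_and, not_le, Nat.lt_succ_iff]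
    simp [Nat.le_one_iff_eq_zero_or_eq_one, card_eq_one, eq_comm]
  rw [← sum_filter_not_add_sum_filter univ (fun S : Finset α => 2 ≤ #S), card_lt_two_eq,
    sum_insert (by simp), sum_map]
  rfl

lemma one_add_pow_sub_one_sub_mul_le_sq (n : ℕ) {t : ℝ} (ht : 0 ≤ t) (hnt : n * t ≤ 1) :
    (1 + t) ^ n - 1 - n * t ≤ (n * t) ^ 2 := by
  have pow_le_exp : (1 + t) ^ n ≤ Real.exp (n * t) := by
    rw [Real.exp_nat_mul, add_comm]
    gcongr
    exact Real.add_one_le_exp t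
  have exp_le : Real.exp (n * t) - 1 - n * t ≤ (n * t) ^ 2 :=
    (le_abs_self _).trans <| Real.abs_exp_sub_one_sub_id_le <| by
      rwa [abs_of_nonneg (by positivity)]
  linarith

lemma sum_two_le_card_pow_card {α R : Type*} [Fintype α] [CommRing R] (t : R) :
    ∑ S : Finset α with 2 ≤ #S, t ^ #S
      = (1 + t) ^ Fintype.card α - 1 - Fintype.card α * t := by
  have binomial : ∑ S : Finset α, t ^ #S = (1 + t) ^ Fintype.card α := by
    simpa [add_comm] using Fintype.sum_pow_mul_eq_add_pow α t 1
  rw [← binomial, sum_finset_eq_empty_add_singleton_add_two_le_card]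
  simp only [card_empty, pow_zero, card_singleton, pow_one, sum_const, card_univ, nsmul_eq_mul]
  ring

end Tail

section SmallBias

variable {n : ℕ} (f : (Fin n → Bool) → ℝ)

lemma biasedExp_sub_biasedExp_zero_sub_mul_levelOneSum (ε : ℝ) :
    biasedExp f ε - biasedExp f 0 - ε * levelOneSum f
      = ∑ S with 2 ≤ #S, ε ^ #S * walshCoeff f S := by
  rw [biasedExp_zero, biasedExp_eq_sum_pow_card_mul_walshCoeff,
    sum_finset_eq_empty_add_singleton_add_two_le_card]
  simp only [card_empty, pow_zero, one_mul, card_singleton, pow_one, ← mul_sum, levelOneSum]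
  ring

theorem abs_biasedExp_sub_biasedExp_zero_sub_mul_levelOneSum_le {ε : ℝ} (hε : n * ε ^ 2 ≤ 1) :
    |biasedExp f ε - biasedExp f 0 - ε * levelOneSum f| ≤ n * ε ^ 2 * uniformL2Norm f := by
  have weights_le : ∑ S : Finset (Fin n) with 2 ≤ #S, (ε ^ #S) ^ 2 ≤ (n * ε ^ 2) ^ 2 := by
    simp only [pow_right_comm ε _ 2, sum_two_le_card_pow_card, Fintype.card_fin]
    exact one_add_pow_sub_one_sub_mul_le_sq n (sq_nonneg ε) hε
  have coeffs_le : ∑ S with 2 ≤ #S, walshCoeff f S ^ 2 ≤ uniformL2Norm f ^ 2 := by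
    rw [← sum_walshCoeff_sq]
    exact sum_le_univ_sum_of_nonneg fun S => sq_nonneg _
  rw [biasedExp_sub_biasedExp_zero_sub_mul_levelOneSum]
  refine abs_le_of_sq_le_sq ?_ (mul_nonneg (by positivity) (uniformL2Norm_nonneg f))
  calc (∑ S with 2 ≤ #S, ε ^ #S * walshCoeff f S) ^ 2
      ≤ (∑ S : Finset (Fin n) with 2 ≤ #S, (ε ^ #S) ^ 2)
          * ∑ S with 2 ≤ #S, walshCoeff f S ^ 2 := sum_mul_sq_le_sq_mul_sq _ _ _
    _ ≤ (n * ε ^ 2) ^ 2 * uniformL2Norm f ^ 2 := by gcongr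
    _ = (n * ε ^ 2 * uniformL2Norm f) ^ 2 := by ring

lemma abs_levelOneSum_le {B δ : ℝ} (hδ₀ : δ ≠ 0) (hδ : n * δ ^ 2 ≤ 1)
    (hcoin : |biasedExp f δ - biasedExp f 0| ≤ |δ| * B) :
    |levelOneSum f| ≤ B + n * |δ| * uniformL2Norm f := by
  refine le_of_mul_le_mul_left ?_ (abs_pos.2 hδ₀)
  calc |δ| * |levelOneSum f|
      = |(biasedExp f δ - biasedExp f 0)
          - (biasedExp f δ - biasedExp f 0 - δ * levelOneSum f)| := by
        rw [sub_sub_cancel, abs_mul]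
    _ ≤ |biasedExp f δ - biasedExp f 0|
          + |biasedExp f δ - biasedExp f 0 - δ * levelOneSum f| := abs_sub _ _
    _ ≤ |δ| * B + n * δ ^ 2 * uniformL2Norm f :=
        add_le_add hcoin (abs_biasedExp_sub_biasedExp_zero_sub_mul_levelOneSum_le f hδ)
    _ = |δ| * (B + n * |δ| * uniformL2Norm f) := by
        rw [← sq_abs δ]
        ring

theorem coin_improvement_small_bias_general {B δ ε : ℝ} (hδ₀ : δ ≠ 0) (hδ : n * δ ^ 2 ≤ 1)
    (hε : n * ε ^ 2 ≤ 1) (hcoin : |biasedExp f δ - biasedExp f 0| ≤ |δ| * B) :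
    |biasedExp f ε - biasedExp f 0| ≤ |ε| * (B + n * (|ε| + |δ|) * uniformL2Norm f) := by
  calc |biasedExp f ε - biasedExp f 0|
      = |(biasedExp f ε - biasedExp f 0 - ε * levelOneSum f) + ε * levelOneSum f| := by
        rw [sub_add_cancel]
    _ ≤ |biasedExp f ε - biasedExp f 0 - ε * levelOneSum f| + |ε| * |levelOneSum f| := by
        rw [← abs_mul]
        exact abs_add_le _ _
    _ ≤ n * ε ^ 2 * uniformL2Norm f + |ε| * (B + n * |δ| * uniformL2Norm f) := by
        gcongr
        · exact abs_biasedExp_sub_biasedExp_zero_sub_mul_levelOneSum_le f hε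
        · exact abs_levelOneSum_le f hδ₀ hδ hcoin
    _ = |ε| * (B + n * (|ε| + |δ|) * uniformL2Norm f) := by
        rw [← sq_abs ε]
        ring

end SmallBias

lemma natCast_mul_sq_le_one_of_abs_le {n : ℕ} {ε : ℝ} (hε : |ε| ≤ 1 / √n) : n * ε ^ 2 ≤ 1 := by
  calc n * ε ^ 2 = n * |ε| ^ 2 := by rw [sq_abs]
    _ ≤ n * (1 / √n) ^ 2 := by gcongr
    _ = n / n := by rw [div_pow, one_pow, Real.sq_sqrt n.cast_nonneg, mul_one_div]
    _ ≤ 1 := div_self_le_one _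

/-- if f : {-1,1}^n → [-1,1] satisfies a coin theorem
|E_δ[f] − E_0[f]| ≤ |δ|·B for all δ ∈ [-1,1] with |δ| ≥ ε₀ (0 < ε₀ ≤ 1/√n),
then for all |ε| < ε₀,
|E_ε[f] − E_0[f]| ≤ |ε|·(B + n·(|ε| + ε₀)) ≤ |ε|·(B + 2n·ε₀). -/
theorem coin_improvement_small_bias (n : ℕ) (hn : 0 < n) (B : ℝ) (hB : 0 ≤ B)
    (ε₀ : ℝ) (hε₀pos : 0 < ε₀) (hε₀ : ε₀ ≤ 1 / Real.sqrt n)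
    (f : (Fin n → Bool) → ℝ) (hf : ∀ x, f x ∈ Set.Icc (-1 : ℝ) 1)
    (hcoin : ∀ δ ∈ Set.Icc (-1 : ℝ) 1, ε₀ ≤ |δ| →
      |biasedExp f δ - biasedExp f 0| ≤ |δ| * B)
    (ε : ℝ) (hε : |ε| < ε₀) :
    |biasedExp f ε - biasedExp f 0| ≤ |ε| * (B + n * (|ε| + ε₀)) ∧
      |ε| * (B + n * (|ε| + ε₀)) ≤ |ε| * (B + 2 * n * ε₀) := by
  have ε₀_le_one : ε₀ ≤ 1 :=
    hε₀.trans (div_le_one_of_le₀ (Real.one_le_sqrt.2 (mod_cast hn)) (Real.sqrt_nonneg _))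
  have coin_at_ε₀ := hcoin ε₀ ⟨by linarith, ε₀_le_one⟩ (le_abs_self ε₀)
  have norm_le_one : uniformL2Norm f ≤ 1 :=
    uniformL2Norm_le_of_abs_le zero_le_one fun x => abs_le.2 (hf x)
  have abs_ε₀ : |ε₀| = ε₀ := abs_of_pos hε₀pos
  constructor
  · calc |biasedExp f ε - biasedExp f 0| ≤ |ε| * (B + n * (|ε| + |ε₀|) * uniformL2Norm f) :=
          coin_improvement_small_bias_general f hε₀pos.ne'
            (natCast_mul_sq_le_one_of_abs_le (abs_ε₀.trans_le hε₀))
            (natCast_mul_sq_le_one_of_abs_le (hε.le.trans hε₀)) coin_at_ε₀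
      _ ≤ |ε| * (B + n * (|ε| + |ε₀|) * 1) := by gcongr
      _ = |ε| * (B + n * (|ε| + ε₀)) := by rw [abs_ε₀, mul_one]
  · calc |ε| * (B + n * (|ε| + ε₀)) ≤ |ε| * (B + n * (ε₀ + ε₀)) := by gcongr
      _ = |ε| * (B + 2 * n * ε₀) := by ring
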